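/- arXiv:2302.13927 — 2 statements merged into one kernel-verified Lean document; each statement's English description precedes it below -/
import Mathlib

section
/- Every probability vector π on {(0,0),(0,1),(1,0),(1,1)} with nonnegative entries summing to 1 that satisfies πM = π has π(0,1) + π(1,0) = 2p(1−a)/(4p + 2a − 4pa). (This is the paper's time-averaged reconstruction error P_E for the two-state DTMC source under the randomized stationary policy, eq. (38).) -/
/-!
The reconstruction `x̂` can be wrong after a step only if the source was not sampled, i.e. with
weight `1 - a`, and the source did not jump onto the old value of `x̂`. For the symmetric source the
weight of such a jump depends on the current pair only through whether `x = x̂`, so the stationary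
error weight `q` solves a scalar equation: on an alphabet of `N` letters,
`q = (1 - a) * ((N - 1) * p * (1 - q) + (1 - p) * q)`.
-/

open Finset Matrix

section

variable {S K : Type*} [DecidableEq S]

/-- The joint transition matrix of a source with transition matrix `P` and its reconstruction under
the randomized stationary policy, which samples with probability `a`. A state is a pair of the
source symbol and its reconstruction; a sample reveals the symbol reached after the transition. -/
def jointKernel [Ring K] (P : Matrix S S K) (a : K) : Matrix (S × S) (S × S) K :=
  of fun s t => P s.1 t.1 *
    (a * (if t.2 = t.1 then 1 else 0) + (1 - a) * (if t.2 = s.2 then 1 else 0))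

variable [Fintype S]

variable (S) in
/-- The transition matrix of the symmetric source on a finite alphabet: each letter moves to each
other letter with probability `p`. The entries may lie in any ring and need not be nonnegative. -/
def symmetricSource [Ring K] (p : K) : Matrix S S K :=
  of fun x y => if x = y then 1 - (Fintype.card S - 1) * p else p

/-- The reconstruction error of a weight `π` on (symbol, reconstruction) pairs: its total mass off
the diagonal. -/
def errorProb [AddCommMonoid K] (π : S × S → K) : K :=
  ∑ s with s.1 ≠ s.2, π s

theorem errorProb_eq_sum_sum [AddCommMonoid K] (π : S × S → K) :
    errorProb π = ∑ y, ∑ z, if y ≠ z then π (y, z) else 0 := by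
  rw [errorProb, sum_filter, Fintype.sum_prod_type]

theorem errorProb_fin_two [AddCommMonoid K] (π : Fin 2 × Fin 2 → K) :
    errorProb π = π (0, 1) + π (1, 0) := by
  simp [errorProb_eq_sum_sum]

theorem sum_diag_eq_sum_sub_errorProb [AddCommGroup K] (π : S × S → K) :
    ∑ s with s.1 = s.2, π s = ∑ s, π s - errorProb π :=
  eq_sub_of_add_eq (sum_filter_add_sum_filter_not ..)

theorem errorProb_vecMul [NonUnitalNonAssocSemiring K] (π : S × S → K)
    (M : Matrix (S × S) (S × S) K) :
    errorProb (π ᵥ* M) = ∑ s, π s * errorProb (M s) := by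
  simp only [errorProb, vecMul, dotProduct, mul_sum]
  exact sum_comm

section Ring

variable [Ring K]

theorem sum_symmetricSource_row (p : K) (x : S) : ∑ y, symmetricSource S p x y = 1 := by
  have entry (y : S) :
      symmetricSource S p x y = p + if x = y then 1 - Fintype.card S * p else 0 := by
    simp only [symmetricSource, of_apply]
    split_ifs
    · noncomm_ring
    · rw [add_zero]
  simp [entry, sum_add_distrib]

theorem errorProb_jointKernel_row {P : Matrix S S K} {s : S × S} (hP : ∑ y, P s.1 y = 1)
    (a : K) :
    errorProb (jointKernel P a s) = (1 - P s.1 s.2) * (1 - a) := by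
  have entry (y z : S) : (if y ≠ z then jointKernel P a s (y, z) else 0) =
      if z = s.2 then (if y ≠ s.2 then P s.1 y * (1 - a) else 0) else 0 := by
    by_cases hyz : y = z <;> by_cases hz : z = s.2 <;> simp_all [jointKernel, eq_comm]
  calc errorProb (jointKernel P a s)
      = ∑ y with y ≠ s.2, P s.1 y * (1 - a) := by
        simp only [errorProb_eq_sum_sum, entry, Finset.sum_ite_eq', mem_univ, if_true, sum_filter]
    _ = (1 - P s.1 s.2) * (1 - a) := by
        rw [← sum_mul, filter_ne', ← hP, ← sum_erase_eq_sub (mem_univ s.2)]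

theorem errorProb_of_vecMul_jointKernel_eq {P : Matrix S S K} (hP : ∀ x, ∑ y, P x y = 1) {a : K}
    {π : S × S → K} (hstat : π ᵥ* jointKernel P a = π) :
    errorProb π = (∑ s, π s * (1 - P s.1 s.2)) * (1 - a) := by
  conv_lhs => rw [← hstat, errorProb_vecMul]
  simp only [errorProb_jointKernel_row (hP _), sum_mul, mul_assoc]

theorem sum_mul_one_sub_symmetricSource (p : K) (π : S × S → K) :
    ∑ s, π s * (1 - symmetricSource S p s.1 s.2) =
      (∑ s, π s - errorProb π) * ((Fintype.card S - 1) * p) + errorProb π * (1 - p) := by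
  rw [← sum_diag_eq_sum_sub_errorProb, errorProb, sum_mul, sum_mul,
    ← sum_filter_add_sum_filter_not univ (fun s : S × S => s.1 = s.2)]
  congr 1 <;> refine sum_congr rfl fun s hs => ?_ <;>
    simp [symmetricSource, (mem_filter.1 hs).2]

end Ring

theorem stmt_2_general [Field K] {p a : K} (hd : a + Fintype.card S * p * (1 - a) ≠ 0)
    {π : S × S → K} (hsum : ∑ s, π s = 1)
    (hstat : π ᵥ* jointKernel (symmetricSource S p) a = π) :
    errorProb π = (Fintype.card S - 1) * p * (1 - a) / (a + Fintype.card S * p * (1 - a)) := by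
  have balance := errorProb_of_vecMul_jointKernel_eq (sum_symmetricSource_row p) hstat
  rw [sum_mul_one_sub_symmetricSource, hsum] at balance
  rw [eq_div_iff hd]
  linear_combination balance

end

/-- Eq. (38) of the paper: any stationary distribution of the joint source–reconstruction
chain for the two-state symmetric DTMC source under the randomized stationary policy has
error probability π(0,1) + π(1,0) = 2p(1−a)/(4p + 2a − 4pa). -/
theorem stmt_2 (p a : ℝ) (hp : 0 < p) (hp' : p < 1) (ha : 0 < a) (ha' : a ≤ 1)
    (P : Fin 2 → Fin 2 → ℝ)
    (hP : ∀ x y, P x y = if x = y then 1 - p else p)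
    (M : (Fin 2 × Fin 2) → (Fin 2 × Fin 2) → ℝ)
    (hM : ∀ s t, M s t =
      P s.1 t.1 * (a * (if t.2 = t.1 then 1 else 0) + (1 - a) * (if t.2 = s.2 then 1 else 0)))
    (pi : Fin 2 × Fin 2 → ℝ)
    (hnn : ∀ s, 0 ≤ pi s) (hsum : ∑ s : Fin 2 × Fin 2, pi s = 1)
    (hstat : ∀ t, ∑ s : Fin 2 × Fin 2, pi s * M s t = pi t) :
    pi (0, 1) + pi (1, 0) = 2 * p * (1 - a) / (4 * p + 2 * a - 4 * p * a) := by
  have hMeq : M = jointKernel (symmetricSource (Fin 2) p) a := by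
    ext s t
    norm_num [hM, hP, jointKernel, symmetricSource]
  have hd : 0 < a + 2 * p * (1 - a) := by
    have := sub_nonneg.2 ha'
    positivity
  rw [← errorProb_fin_two, show 4 * p + 2 * a - 4 * p * a = 2 * (a + 2 * p * (1 - a)) by ring,
    stmt_2_general (by simpa using hd.ne') hsum (hMeq ▸ funext hstat), Fintype.card_fin]
  push_cast
  field_simp
  ring
end

section
/- For every x ∈ [0,1], the inequality h(x) < p/(p+q) holds if and only if x·p_s·(1 + q − p) > q − p. In particular, if q ≤ p then h(x) < p/(p+q) for every x with x·p_s > 0, while if q > p then h(x) < p/(p+q) if and only if x > (q−p)/(p_s·(1+q−p)). (This is the paper's comparison of the randomized stationary policy against never sampling when the receiver starts in state 0, eqs. (39)–(41).) -/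
/-!
Write `s = x * ps`. The error factors as `p / (p + q)` times `2 * q * (1 - s) / D`, where
`D = (1 - s) * (p + q) + s` is a convex combination of `p + q` and `1`, hence positive. Sampling
therefore beats never sampling exactly when `2 * q * (1 - s) < D`, and
`D - 2 * q * (1 - s) = s * (1 + q - p) - (q - p)`.
-/

section

variable {K : Type*} [Field K]

/-- The time-averaged reconstruction error of the two-state source with transition probabilities
`p` (from `0` to `1`) and `q` (from `1` to `0`) under the randomized stationary policy. The
sampling and transmission success probabilities enter only through their product `s`, the
probability that a fresh sample is received in a given slot. -/
def reconstructionError (p q s : K) : K :=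
  2 * p * q * (1 - s) / ((p + q) * (p * (1 - s) + (1 - q) * s + q))

theorem reconstructionError_eq_mul (p q s : K) :
    reconstructionError p q s = p / (p + q) * (2 * q * (1 - s) / ((1 - s) * (p + q) + s)) := by
  rw [reconstructionError, div_mul_div_comm]
  congr 1 <;> ring

variable [LinearOrder K] [IsStrictOrderedRing K] {p q s : K}

theorem one_sub_mul_add_pos {c : K} (hc : 0 < c) (hs : s ∈ Set.Icc 0 1) :
    0 < (1 - s) * c + s := by
  simpa using convex_Ioi (0 : K) hc one_pos (sub_nonneg.2 hs.2) hs.1 (sub_add_cancel 1 s)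

theorem reconstructionError_lt_iff (hp : 0 < p) (hpq : 0 < p + q) (hs : s ∈ Set.Icc 0 1) :
    reconstructionError p q s < p / (p + q) ↔ q - p < s * (1 + q - p) := by
  have gap : (1 - s) * (p + q) + s - 2 * q * (1 - s) = s * (1 + q - p) - (q - p) := by ring
  rw [reconstructionError_eq_mul, mul_lt_iff_lt_one_right (div_pos hp hpq),
    div_lt_one (one_sub_mul_add_pos hpq hs), ← sub_pos, gap, sub_pos]

theorem reconstructionError_lt_of_le (hp : 0 < p) (hpq : 0 < p + q) (hp' : p < 1 + q)
    (hqp : q ≤ p) (hs : s ∈ Set.Ioc 0 1) : reconstructionError p q s < p / (p + q) :=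
  (reconstructionError_lt_iff hp hpq (Set.Ioc_subset_Icc_self hs)).2 <|
    (sub_nonpos.2 hqp).trans_lt (mul_pos hs.1 (sub_pos.2 hp'))

theorem reconstructionError_mul_lt_iff_div_lt {ps x : K} (hp : 0 < p) (hpq : 0 < p + q)
    (hp' : p < 1 + q) (hps : 0 < ps) (hs : x * ps ∈ Set.Icc 0 1) :
    reconstructionError p q (x * ps) < p / (p + q) ↔ (q - p) / (ps * (1 + q - p)) < x := by
  rw [reconstructionError_lt_iff hp hpq hs, div_lt_iff₀ (mul_pos hps (sub_pos.2 hp')), mul_assoc]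

theorem stmt_10_general {ps : K} (hp : 0 < p) (hpq : 0 < p + q) (hp' : p < 1 + q) (hps : 0 < ps)
    {h : K → K}
    (hh : ∀ x, h x =
      2 * p * q * (1 - x * ps) / ((p + q) * (p * (1 - x * ps) + (1 - q) * x * ps + q)))
    {x : K} (hs : x * ps ∈ Set.Icc 0 1) :
    (h x < p / (p + q) ↔ q - p < x * ps * (1 + q - p)) ∧
      (q ≤ p → 0 < x * ps → h x < p / (p + q)) ∧
      (h x < p / (p + q) ↔ (q - p) / (ps * (1 + q - p)) < x) := by
  have h_eq : h x = reconstructionError p q (x * ps) := by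
    rw [hh, reconstructionError, mul_assoc (1 - q)]
  rw [h_eq]
  exact ⟨reconstructionError_lt_iff hp hpq hs,
    fun hqp hs₀ => reconstructionError_lt_of_le hp hpq hp' hqp ⟨hs₀, hs.2⟩,
    reconstructionError_mul_lt_iff_div_lt hp hpq hp' hps hs⟩

end

/-- Eqs. (39)–(41) of the paper: comparison of the randomized stationary policy with the
no-sampling policy for the two-state Birth-Death source when the receiver starts in
state 0. -/
theorem stmt_10 (p q ps : ℝ) (hp : 0 < p) (hp' : p < 1) (hq : 0 < q) (hq' : q < 1)
    (hps : 0 < ps) (hps' : ps ≤ 1)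
    (h : ℝ → ℝ)
    (hh : ∀ x, h x =
      2 * p * q * (1 - x * ps) / ((p + q) * (p * (1 - x * ps) + (1 - q) * x * ps + q))) :
    ∀ x ∈ Set.Icc (0 : ℝ) 1,
      (h x < p / (p + q) ↔ q - p < x * ps * (1 + q - p)) ∧
      (q ≤ p → 0 < x * ps → h x < p / (p + q)) ∧
      (p < q → (h x < p / (p + q) ↔ (q - p) / (ps * (1 + q - p)) < x)) := by
  intro x hx
  have hs : x * ps ∈ Set.Icc (0 : ℝ) 1 :=
    ⟨mul_nonneg hx.1 hps.le, mul_le_one₀ hx.2 hps.le hps'⟩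
  obtain ⟨lt_iff, lt_of_le, threshold⟩ :=
    stmt_10_general hp (add_pos hp hq) (by linarith) hps hh hs
  exact ⟨lt_iff, lt_of_le, fun _ => threshold⟩
end
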